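/- Let η ∈ ℂ∖{0} satisfy nη ∉ Λ for every positive integer n, let ν ∈ ℂ, and let a ∈ ℂ⁴ with a₁+a₂+a₃+a₄ = 0. Then for each t ∈ {0,1,2,3}, the operator A(a,ν) maps ℳ_t into ℳ_t; that is, if g ∈ ℳ_t then the function z ↦ f(a,ν;z)g(z+η) + f(a,ν;−z)g(z−η) belongs to ℳ_t. -/

import Mathlib

open Complex Filter

noncomputable section

/-- The Jacobi theta function `θ₁(z|τ)`. -/
def θ (τ z : ℂ) : ℂ :=
  I * ∑' n : ℤ, (-1 : ℂ) ^ n * Complex.exp (Real.pi * I * τ * ((n : ℂ) - 1/2) ^ 2) *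
    Complex.exp (Real.pi * I * (2 * (n : ℂ) - 1) * z)

/-- `f(a,ν;z) = θ(z+a₁−ν)θ(z+a₂−ν)θ(z+a₃−ν)θ(z+a₄−ν)/θ(2z)`. -/
def fcoef (τ : ℂ) (a : Fin 4 → ℂ) (ν z : ℂ) : ℂ :=
  (∏ i, θ τ (z + a i - ν)) / θ τ (2 * z)

/-- The half-periods `ω₀ = 0, ω₁ = 1/2, ω₂ = (1+τ)/2, ω₃ = τ/2`. -/
def ωh (τ : ℂ) : Fin 4 → ℂ := ![0, 1/2, (1 + τ)/2, τ/2]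

/-- `λ₀ = λ₁ = 0`, `λ₂ = λ₃ = 8iπν`. -/
def lamh (ν : ℂ) : Fin 4 → ℂ :=
  ![0, 0, 8 * Real.pi * I * ν, 8 * Real.pi * I * ν]

/-- A meromorphic function is regular (analytic after removing a removable
singularity) at a point. -/
def RegularAt (g : ℂ → ℂ) (p : ℂ) : Prop :=
  ∃ h : ℂ → ℂ, AnalyticAt ℂ h p ∧ ∀ᶠ z in nhdsWithin p {p}ᶜ, g z = h z

/-- Membership in the space `ℳ_t`: meromorphic on `ℂ`, analytic at every point
`ω_t + kη` (`k ∈ ℤ`), and satisfying `g(ω_t − z) = exp(λ_t z/η)·g(ω_t + z)`. -/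
def memM (τ η ν : ℂ) (t : Fin 4) (g : ℂ → ℂ) : Prop :=
  MeromorphicOn g Set.univ ∧ (∀ k : ℤ, RegularAt g (ωh τ t + (k : ℂ) * η)) ∧
  (∀ z, g (ωh τ t - z) = Complex.exp (lamh ν t * z / η) * g (ωh τ t + z))

/-- The bijection `(j, k) ↦ (j + k, j - k)` and `(j, k) ↦ (j + k + 1, j - k)` from two copies of
`ℤ × ℤ` onto `ℤ × ℤ`. -/
def parityEquiv : (ℤ × ℤ) ⊕ (ℤ × ℤ) ≃ ℤ × ℤ :=
  Equiv.ofBijective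
    (Sum.elim (fun p => (p.1 + p.2, p.1 - p.2)) (fun p => (p.1 + p.2 + 1, p.1 - p.2))) <| by
    constructor
    · rintro (⟨a, b⟩ | ⟨a, b⟩) (⟨c, d⟩ | ⟨c, d⟩) h <;>
        simp only [Sum.elim_inl, Sum.elim_inr, Prod.mk.injEq] at h
      · have h1 : a = c := by lia
        have h2 : b = d := by lia
        rw [h1, h2]
      · lia
      · lia
      · have h1 : a = c := by lia
        have h2 : b = d := by lia
        rw [h1, h2]
    · rintro ⟨m, n⟩
      rcases Int.even_or_odd' (m + n) with ⟨k, hk | hk⟩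
      · exact ⟨Sum.inl (k, m - k), by
          simp only [Sum.elim_inl, Prod.mk.injEq]; constructor <;> lia⟩
      · exact ⟨Sum.inr (k, k - n), by
          simp only [Sum.elim_inr, Prod.mk.injEq]; constructor <;> lia⟩

lemma parityEquiv_inl (p : ℤ × ℤ) : parityEquiv (Sum.inl p) = (p.1 + p.2, p.1 - p.2) := rfl

lemma parityEquiv_inr (p : ℤ × ℤ) : parityEquiv (Sum.inr p) = (p.1 + p.2 + 1, p.1 - p.2) := rfl

/-- The odd-index part of `∑ q^(N²/2) exp(πiNw)`; the even-index part is
`jacobiTheta₂ w (2 * τ)`. -/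
def oddTheta (τ w : ℂ) : ℂ :=
  cexp (Real.pi * I * τ / 2 + Real.pi * I * w) * jacobiTheta₂ (w + τ) (2 * τ)

lemma im_two_mul_pos {τ : ℂ} (hτ : 0 < τ.im) : 0 < (2 * τ).im := by
  simpa using hτ

lemma hasSum_jacobiTheta₂_mul {τ σ : ℂ} (hτ : 0 < τ.im) (hσ : 0 < σ.im) (x y : ℂ) :
    HasSum (fun p : ℤ × ℤ => jacobiTheta₂_term p.1 x τ * jacobiTheta₂_term p.2 y σ)
      (jacobiTheta₂ x τ * jacobiTheta₂ y σ) := by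
  have h1 := hasSum_jacobiTheta₂_term x hτ
  have h2 := hasSum_jacobiTheta₂_term y hσ
  have h3 := summable_mul_of_summable_norm (f := fun n => jacobiTheta₂_term n x τ)
    (g := fun n => jacobiTheta₂_term n y σ) h1.summable.norm h2.summable.norm
  rw [← h1.tsum_eq, ← h2.tsum_eq,
    tsum_mul_tsum_of_summable_norm h1.summable.norm h2.summable.norm]
  exact h3.hasSum

lemma jacobiTheta₂_mul_jacobiTheta₂ {τ : ℂ} (hτ : 0 < τ.im) (x y : ℂ) :
    jacobiTheta₂ x τ * jacobiTheta₂ y τ =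
      jacobiTheta₂ (x + y) (2 * τ) * jacobiTheta₂ (x - y) (2 * τ) +
        oddTheta τ (x + y) * oddTheta τ (x - y) := by
  have h2 := im_two_mul_pos hτ
  have h := hasSum_jacobiTheta₂_mul hτ hτ x y
  rw [← parityEquiv.hasSum_iff] at h
  refine h.unique (HasSum.sum ?_ ?_)
  · convert hasSum_jacobiTheta₂_mul h2 h2 (x + y) (x - y) using 2 with p
    simp only [Function.comp_apply, parityEquiv_inl,
      jacobiTheta₂_term, ← Complex.exp_add]
    congr 1
    push_cast
    ring
  · rw [oddTheta, oddTheta, mul_mul_mul_comm]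
    have h4 := (hasSum_jacobiTheta₂_mul h2 h2 (x + y + τ) (x - y + τ)).mul_left
      (cexp (Real.pi * I * τ / 2 + Real.pi * I * (x + y)) *
        cexp (Real.pi * I * τ / 2 + Real.pi * I * (x - y)))
    refine h4.congr_fun fun p => ?_
    simp only [Function.comp_apply, parityEquiv_inr, jacobiTheta₂_term, ← Complex.exp_add]
    congr 1
    push_cast
    ring

lemma oddTheta_add_one (τ w : ℂ) : oddTheta τ (w + 1) = -oddTheta τ w := by
  have : Real.pi * I * τ / 2 + Real.pi * I * (w + 1) =
      Real.pi * I * τ / 2 + Real.pi * I * w + Real.pi * I := by ring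
  rw [oddTheta, oddTheta, show w + 1 + τ = w + τ + 1 by ring, jacobiTheta₂_add_left, this,
    Complex.exp_add _ (Real.pi * I), Complex.exp_pi_mul_I]
  ring

lemma jacobiTheta₂_two_mul_eq_zero {τ : ℂ} (hτ : 0 < τ.im) (h : ∀ z, jacobiTheta₂ z τ = 0)
    (z : ℂ) : jacobiTheta₂ z (2 * τ) = 0 := by
  have key : ∀ u v, jacobiTheta₂ u (2 * τ) * jacobiTheta₂ v (2 * τ) +
      oddTheta τ u * oddTheta τ v = 0 := fun u v => by
    have := jacobiTheta₂_mul_jacobiTheta₂ hτ ((u + v) / 2) ((u - v) / 2)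
    rw [h, zero_mul, show (u + v) / 2 + (u - v) / 2 = u by ring,
      show (u + v) / 2 - (u - v) / 2 = v by ring] at this
    exact this.symm
  have h1 := key z z
  have h2 := key (z + 1) z
  rw [jacobiTheta₂_add_left, oddTheta_add_one] at h2
  exact mul_self_eq_zero.mp (by linear_combination (h1 + h2) / 2)

lemma exists_jacobiTheta₂_ne_zero {τ : ℂ} (hτ : 0 < τ.im) : ∃ z, jacobiTheta₂ z τ ≠ 0 := by
  by_contra! h
  have him : ∀ n : ℕ, ((2 : ℂ) ^ n * τ).im = 2 ^ n * τ.im := fun n => by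
    rw [← Complex.ofReal_ofNat, ← Complex.ofReal_pow, Complex.im_ofReal_mul]
  have hpos : ∀ n : ℕ, 0 < ((2 : ℂ) ^ n * τ).im := fun n => by
    rw [him]; positivity
  have hz : ∀ n : ℕ, ∀ z, jacobiTheta₂ z (2 ^ n * τ) = 0 := by
    intro n
    induction n with
    | zero => simpa using h
    | succ n ih =>
      intro z
      rw [pow_succ', mul_assoc]
      exact jacobiTheta₂_two_mul_eq_zero (hpos n) ih z
  have hlim : Tendsto (fun n : ℕ => Real.exp (-Real.pi * (2 ^ n * τ.im))) atTop (nhds 0) := by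
    refine Real.tendsto_exp_atBot.comp (Tendsto.const_mul_atTop_of_neg (by simp [Real.pi_pos]) ?_)
    exact (tendsto_pow_atTop_atTop_of_one_lt one_lt_two).atTop_mul_const hτ
  obtain ⟨n, hn⟩ := (hlim.eventually (gt_mem_nhds (show (0 : ℝ) < 1 / 3 by norm_num))).exists
  have hb := norm_jacobiTheta_sub_one_le (hpos n)
  rw [jacobiTheta_eq_jacobiTheta₂, hz, him] at hb
  rw [zero_sub, norm_neg, norm_one, div_mul_eq_mul_div, le_div_iff₀ (by linarith)] at hb
  linarith

lemma θ_eq_jacobiTheta₂ (τ z : ℂ) :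
    θ τ z = I * cexp (Real.pi * I * τ / 4 - Real.pi * I * z) *
      jacobiTheta₂ (z + (1 - τ) / 2) τ := by
  rw [θ, jacobiTheta₂, mul_assoc I (cexp _) (tsum _), ← tsum_mul_left (a := cexp _)]
  refine congrArg (I * ·) (tsum_congr fun n => ?_)
  rw [jacobiTheta₂_term, ← Complex.exp_pi_mul_I, ← Complex.exp_int_mul, ← Complex.exp_add,
    ← Complex.exp_add, ← Complex.exp_add]
  congr 1
  ring

lemma θ_add_one (τ z : ℂ) : θ τ (z + 1) = -θ τ z := by
  have : Real.pi * I * τ / 4 - Real.pi * I * (z + 1) =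
      Real.pi * I * τ / 4 - Real.pi * I * z - Real.pi * I := by ring
  rw [θ_eq_jacobiTheta₂, θ_eq_jacobiTheta₂, add_right_comm, jacobiTheta₂_add_left, this,
    Complex.exp_sub _ (Real.pi * I), Complex.exp_pi_mul_I]
  ring

lemma θ_add_tau (τ z : ℂ) :
    θ τ (z + τ) = -cexp (-(Real.pi * I * τ) - 2 * Real.pi * I * z) * θ τ z := by
  have e : cexp (Real.pi * I * τ / 4 - Real.pi * I * (z + τ)) *
      cexp (-Real.pi * I * (τ + 2 * (z + (1 - τ) / 2))) =
      -(cexp (-(Real.pi * I * τ) - 2 * Real.pi * I * z) *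
        cexp (Real.pi * I * τ / 4 - Real.pi * I * z)) := by
    rw [← Complex.exp_add, ← Complex.exp_add, ← Complex.exp_sub_pi_mul_I]
    congr 1
    ring
  rw [θ_eq_jacobiTheta₂, θ_eq_jacobiTheta₂, add_right_comm, jacobiTheta₂_add_left']
  linear_combination I * jacobiTheta₂ (z + (1 - τ) / 2) τ * e

lemma θ_add_mul_θ_sub {τ : ℂ} (hτ : 0 < τ.im) (z s : ℂ) :
    θ τ (z + s) * θ τ (z - s) =
      jacobiTheta₂ (2 * z) (2 * τ) * oddTheta τ (2 * s) -
        oddTheta τ (2 * z) * jacobiTheta₂ (2 * s) (2 * τ) := by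
  have hm := jacobiTheta₂_mul_jacobiTheta₂ hτ (z + s + (1 - τ) / 2) (z - s + (1 - τ) / 2)
  rw [show z + s + (1 - τ) / 2 + (z - s + (1 - τ) / 2) = 2 * z - τ + 1 by ring,
    show z + s + (1 - τ) / 2 - (z - s + (1 - τ) / 2) = 2 * s by ring, jacobiTheta₂_add_left,
    oddTheta_add_one] at hm
  have ha := jacobiTheta₂_add_left' (2 * z - τ) (2 * τ)
  rw [show 2 * z - τ + 2 * τ = 2 * z + τ by ring] at ha
  have e1 : cexp (Real.pi * I * τ / 4 - Real.pi * I * (z + s)) *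
      cexp (Real.pi * I * τ / 4 - Real.pi * I * (z - s)) =
      cexp (Real.pi * I * τ / 2 - 2 * Real.pi * I * z) := by
    rw [← Complex.exp_add]; congr 1; ring
  have e2 : cexp (Real.pi * I * τ / 2 + Real.pi * I * (2 * z)) *
      cexp (-Real.pi * I * (2 * τ + 2 * (2 * z - τ))) =
      cexp (Real.pi * I * τ / 2 - 2 * Real.pi * I * z) := by
    rw [← Complex.exp_add]; congr 1; ring
  have e3 : cexp (Real.pi * I * τ / 2 - 2 * Real.pi * I * z) *
      cexp (Real.pi * I * τ / 2 + Real.pi * I * (2 * z - τ)) = 1 := by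
    rw [← Complex.exp_add, ← Complex.exp_zero]; congr 1; ring
  have hb : oddTheta τ (2 * z) = cexp (Real.pi * I * τ / 2 - 2 * Real.pi * I * z) *
      jacobiTheta₂ (2 * z - τ) (2 * τ) := by
    rw [oddTheta, ha, ← mul_assoc, e2]
  have hc : cexp (Real.pi * I * τ / 2 - 2 * Real.pi * I * z) * oddTheta τ (2 * z - τ) =
      jacobiTheta₂ (2 * z) (2 * τ) := by
    rw [oddTheta, ← mul_assoc, e3, one_mul, sub_add_cancel]
  rw [θ_eq_jacobiTheta₂, θ_eq_jacobiTheta₂, hb, ← hc]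
  linear_combination (I * I * jacobiTheta₂ (z + s + (1 - τ) / 2) τ *
    jacobiTheta₂ (z - s + (1 - τ) / 2) τ) * e1 +
    (I * I * cexp (Real.pi * I * τ / 2 - 2 * Real.pi * I * z)) * hm +
    cexp (Real.pi * I * τ / 2 - 2 * Real.pi * I * z) *
      (jacobiTheta₂ (2 * z - τ) (2 * τ) * jacobiTheta₂ (2 * s) (2 * τ) -
        oddTheta τ (2 * z - τ) * oddTheta τ (2 * s)) * Complex.I_mul_I

lemma differentiable_jacobiTheta₂ {τ : ℂ} (hτ : 0 < τ.im) :
    Differentiable ℂ fun z => jacobiTheta₂ z τ :=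
  fun z => differentiableAt_jacobiTheta₂_fst z hτ

lemma differentiable_oddTheta {τ : ℂ} (hτ : 0 < τ.im) : Differentiable ℂ (oddTheta τ) := by
  have := differentiable_jacobiTheta₂ (im_two_mul_pos hτ)
  exact Differentiable.mul (by fun_prop) (this.comp (by fun_prop : Differentiable ℂ (· + τ)))

lemma differentiable_θ {τ : ℂ} (hτ : 0 < τ.im) : Differentiable ℂ (θ τ) := by
  have h := differentiable_jacobiTheta₂ hτ
  rw [funext (θ_eq_jacobiTheta₂ τ)]
  exact Differentiable.mul (by fun_prop)
    (h.comp (by fun_prop : Differentiable ℂ (· + (1 - τ) / 2)))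

lemma exists_θ_ne_zero {τ : ℂ} (hτ : 0 < τ.im) : ∃ z, θ τ z ≠ 0 := by
  obtain ⟨z, hz⟩ := exists_jacobiTheta₂_ne_zero hτ
  refine ⟨z - (1 - τ) / 2, ?_⟩
  rw [θ_eq_jacobiTheta₂, sub_add_cancel]
  exact mul_ne_zero (mul_ne_zero I_ne_zero (Complex.exp_ne_zero _)) hz

lemma θ_zero {τ : ℂ} (hτ : 0 < τ.im) : θ τ 0 = 0 := by
  obtain ⟨y, hy⟩ := exists_θ_ne_zero hτ
  have h := θ_add_mul_θ_sub hτ (y / 2) (y / 2)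
  rw [add_halves, sub_self, mul_comm (oddTheta _ _), sub_self] at h
  exact (mul_eq_zero.mp h).resolve_left hy

/-- Two entire functions with vanishing Wronskian are proportional. -/
lemma eq_const_mul_of_wronskian_eq_zero {f g : ℂ → ℂ} (hf : Differentiable ℂ f)
    (hg : Differentiable ℂ g) (hw : ∀ z, deriv f z * g z = f z * deriv g z) {w : ℂ}
    (hgw : g w ≠ 0) (z : ℂ) : f z = f w / g w * g z := by
  obtain ⟨r, hr, hball⟩ := Metric.eventually_nhds_iff_ball.mp
    (hg.continuous.continuousAt.eventually_ne hgw)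
  have hquot : ∀ x ∈ Metric.ball w r, f x / g x = f w / g w := fun x hx => by
    refine Metric.isOpen_ball.is_const_of_deriv_eq_zero (𝕜 := ℂ) (f := fun y => f y / g y)
      (convex_ball w r).isPreconnected
      (fun y hy => (hf.differentiableAt.div hg.differentiableAt
        (hball y hy)).differentiableWithinAt) (fun y hy => ?_) hx (Metric.mem_ball_self hr)
    rw [deriv_fun_div hf.differentiableAt hg.differentiableAt (hball y hy), hw, sub_self, zero_div,
      Pi.zero_apply]
  have heq : f =ᶠ[nhds w] fun z => f w / g w * g z := by
    filter_upwards [Metric.ball_mem_nhds w hr] with x hx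
    rw [← hquot x hx, div_mul_cancel₀ _ (hball x hx)]
  have hA : ∀ {F : ℂ → ℂ}, Differentiable ℂ F → AnalyticOnNhd ℂ F Set.univ :=
    fun hF x _ => hF.analyticAt x
  exact congrFun ((hA hf).eq_of_eventuallyEq (hA (hg.const_mul _)) heq) z

lemma deriv_θ_zero_ne_zero {τ : ℂ} (hτ : 0 < τ.im) : deriv (θ τ) 0 ≠ 0 := by
  intro h0
  set A : ℂ → ℂ := fun z => jacobiTheta₂ (2 * z) (2 * τ) with hA
  set B : ℂ → ℂ := fun z => oddTheta τ (2 * z) with hB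
  have hdA : Differentiable ℂ A := (differentiable_jacobiTheta₂ (im_two_mul_pos hτ)).comp
    (by fun_prop : Differentiable ℂ fun z : ℂ => 2 * z)
  have hdB : Differentiable ℂ B := (differentiable_oddTheta hτ).comp
    (by fun_prop : Differentiable ℂ fun z : ℂ => 2 * z)
  have hθ := differentiable_θ hτ
  have hAB : ∀ z s, θ τ (z + s) * θ τ (z - s) = A z * B s - B z * A s := θ_add_mul_θ_sub hτ
  have hW : ∀ s, deriv B s * A s = B s * deriv A s := by
    intro s
    have h1 : HasDerivAt (fun z => θ τ (z + s) * θ τ (z - s))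
        (deriv (θ τ) (s + s) * θ τ (s - s) + θ τ (s + s) * deriv (θ τ) (s - s)) s :=
      ((hθ (s + s)).hasDerivAt.comp_add_const s s).mul
        ((hθ (s - s)).hasDerivAt.comp_sub_const s s)
    have h2 : HasDerivAt (fun z => A z * B s - B z * A s)
        (deriv A s * B s - deriv B s * A s) s :=
      ((hdA s).hasDerivAt.mul_const _).sub ((hdB s).hasDerivAt.mul_const _)
    rw [funext fun z => hAB z s] at h1
    have h3 := h1.unique h2
    rw [sub_self, θ_zero hτ, h0] at h3
    linear_combination h3
  obtain ⟨y, hy⟩ := exists_θ_ne_zero hτ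
  obtain ⟨s, hs⟩ : ∃ s, A s ≠ 0 := by
    obtain ⟨z, hz⟩ := exists_jacobiTheta₂_ne_zero (im_two_mul_pos hτ)
    exact ⟨z / 2, by simpa only [hA, mul_div_cancel₀ z (two_ne_zero' ℂ)] using hz⟩
  have hprop := eq_const_mul_of_wronskian_eq_zero hdB hdA hW hs
  have h := hAB y 0
  rw [add_zero, sub_zero, hprop y, hprop 0] at h
  exact hy (mul_self_eq_zero.mp (by linear_combination h))

lemma θ_exchange {τ : ℂ} (hτ : 0 < τ.im) {u : ℂ} (hu : θ τ u = 0) (w v t : ℂ) :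
    θ τ (w + t + u) * θ τ (v + u) * (θ τ w * θ τ (v + t)) =
      θ τ (w + u) * θ τ (v + t + u) * (θ τ (w + t) * θ τ v) := by
  have h : ∀ x y p m, x + y = p → x - y = m → θ τ x * θ τ y =
      jacobiTheta₂ p (2 * τ) * oddTheta τ m - oddTheta τ p * jacobiTheta₂ m (2 * τ) := by
    rintro x y _ _ rfl rfl
    have := θ_add_mul_θ_sub hτ ((x + y) / 2) ((x - y) / 2)
    rwa [show (x + y) / 2 + (x - y) / 2 = x by ring, show (x + y) / 2 - (x - y) / 2 = y by ring,
      mul_div_cancel₀ _ (two_ne_zero' ℂ), mul_div_cancel₀ _ (two_ne_zero' ℂ)] at this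
  have h0 := h (w + v + t + u) u (w + v + t + 2 * u) (w + v + t) (by ring) (by ring)
  rw [hu, mul_zero] at h0
  rw [h (w + t + u) (v + u) (w + v + t + 2 * u) (w + t - v) (by ring) (by ring),
    h w (v + t) (w + v + t) (w - v - t) (by ring) (by ring),
    h (w + u) (v + t + u) (w + v + t + 2 * u) (w - v - t) (by ring) (by ring),
    h (w + t) v (w + v + t) (w + t - v) (by ring) (by ring)]
  linear_combination (oddTheta τ (w + t - v) * jacobiTheta₂ (w - v - t) (2 * τ) -
    jacobiTheta₂ (w + t - v) (2 * τ) * oddTheta τ (w - v - t)) * h0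

lemma exists_θ_mul_θ_add_ne_zero {τ : ℂ} (hτ : 0 < τ.im) (u : ℂ) :
    ∃ w, θ τ w ≠ 0 ∧ θ τ (w + u) ≠ 0 := by
  have hθ := differentiable_θ hτ
  have hθu : Differentiable ℂ fun z => θ τ (z + u) :=
    hθ.comp (by fun_prop : Differentiable ℂ (· + u))
  obtain ⟨y, hy⟩ := exists_θ_ne_zero hτ
  by_contra! h
  have hprod : ∀ z ∈ Set.univ, θ τ z * θ τ (z + u) = 0 := fun z _ => by
    by_cases hz : θ τ z = 0
    · rw [hz, zero_mul]
    · rw [h z hz, mul_zero]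
  rcases AnalyticOnNhd.eq_zero_or_eq_zero_of_mul_eq_zero (fun z _ => hθ.analyticAt z)
    (fun z _ => hθu.analyticAt z) hprod isPreconnected_univ with h0 | h0
  · exact hy (h0 y trivial)
  · exact hy (by simpa using h0 (y - u) trivial)

/-- Translating `θ` by one of its zeros multiplies it by an exponential. -/
lemma exists_θ_add_eq {τ : ℂ} (hτ : 0 < τ.im) {u : ℂ} (hu : θ τ u = 0) :
    ∃ α c : ℂ, ∀ z, θ τ (z + u) = c * cexp (α * z) * θ τ z := by
  have hθ := differentiable_θ hτ
  obtain ⟨v, hv, hvu⟩ := exists_θ_mul_θ_add_ne_zero hτ u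
  set α := deriv (θ τ) (v + u) / θ τ (v + u) - deriv (θ τ) v / θ τ v with hα
  have hlog : ∀ w, deriv (θ τ) (w + u) * θ τ w - θ τ (w + u) * deriv (θ τ) w =
      α * (θ τ (w + u) * θ τ w) := by
    intro w
    have hd : ∀ x y, HasDerivAt (fun t => θ τ (x + t + y)) (deriv (θ τ) (x + y)) 0 :=
      fun x y => by
        have h1 : HasDerivAt (θ τ) (deriv (θ τ) (x + y)) (0 + (x + y)) := by
          rw [zero_add]; exact (hθ (x + y)).hasDerivAt
        simpa only [show ∀ t : ℂ, t + (x + y) = x + t + y from fun t => by ring] using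
          h1.comp_add_const 0 (x + y)
    have hd0 : ∀ x, HasDerivAt (fun t => θ τ (x + t)) (deriv (θ τ) x) 0 := fun x => by
      simpa only [add_zero] using hd x 0
    have h1 := ((hd w u).mul_const (θ τ (v + u))).mul ((hd0 v).const_mul (θ τ w))
    have h2 := ((hd v u).const_mul (θ τ (w + u))).mul ((hd0 w).mul_const (θ τ v))
    have h3 := (h1.congr_deriv rfl).unique (h2.congr_of_eventuallyEq
      (Filter.Eventually.of_forall fun t => θ_exchange hτ hu w v t))
    simp only [add_zero] at h3
    rw [hα]
    field_simp
    linear_combination h3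
  have hf : Differentiable ℂ fun z => cexp (-α * z) * θ τ (z + u) :=
    Differentiable.mul (by fun_prop) (hθ.comp (by fun_prop : Differentiable ℂ (· + u)))
  have hprop := eq_const_mul_of_wronskian_eq_zero hf hθ (fun z => by
    have h1 : HasDerivAt (fun z => cexp (-α * z)) (cexp (-α * z) * (-α * 1)) z :=
      ((hasDerivAt_id z).const_mul (-α)).cexp
    have h2 : HasDerivAt (fun z => cexp (-α * z) * θ τ (z + u)) _ z :=
      h1.mul ((hθ (z + u)).hasDerivAt.comp_add_const z u)
    rw [h2.deriv]
    linear_combination cexp (-α * z) * hlog z) hv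
  refine ⟨α, cexp (-α * v) * θ τ (v + u) / θ τ v, fun z => ?_⟩
  have h1 : cexp (α * z) * cexp (-α * z) = 1 := by
    rw [← Complex.exp_add, ← Complex.exp_zero]; congr 1; ring
  rw [mul_right_comm, ← hprop z]
  linear_combination -θ τ (z + u) * h1

/-- Every zero of `θ` lies in the lattice `ℤ + τℤ`. -/
lemma mem_lattice_of_θ_eq_zero {τ : ℂ} (hτ : 0 < τ.im) {u : ℂ} (hu : θ τ u = 0) :
    ∃ m l : ℤ, u = m + τ * l := by
  obtain ⟨α, c, h⟩ := exists_θ_add_eq hτ hu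
  obtain ⟨w, hw, hwu⟩ := exists_θ_mul_θ_add_ne_zero hτ u
  have h1 : cexp α = 1 := by
    have h2 := h (w + 1)
    rw [show w + 1 + u = w + u + 1 by ring, θ_add_one, θ_add_one, mul_add, mul_one,
      Complex.exp_add] at h2
    refine mul_left_cancel₀ hwu ?_
    linear_combination h2 + cexp α * h w
  have h2 : cexp (-(2 * Real.pi * I * u)) = cexp (α * τ) := by
    have h3 := h (w + τ)
    rw [show w + τ + u = w + u + τ by ring, θ_add_tau, θ_add_tau, mul_add α, Complex.exp_add,
      mul_add _ w u, ← sub_sub, sub_eq_add_neg _ (2 * Real.pi * I * u), Complex.exp_add _ (-_)] at h3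
    refine mul_left_cancel₀ (mul_ne_zero (Complex.exp_ne_zero
      (-(Real.pi * I * τ) - 2 * Real.pi * I * w)) hwu) ?_
    linear_combination -h3 - cexp (α * τ) *
      cexp (-(Real.pi * I * τ) - 2 * Real.pi * I * w) * h w
  obtain ⟨k, hk⟩ := Complex.exp_eq_one_iff.mp h1
  obtain ⟨l, hl⟩ := Complex.exp_eq_exp_iff_exists_int.mp h2
  refine ⟨-l, -k, mul_left_cancel₀ Complex.two_pi_I_ne_zero ?_⟩
  push_cast
  rw [hk] at hl
  linear_combination -hl

lemma exists_two_mul_ωh_eq (τ : ℂ) (t : Fin 4) : ∃ m l : ℤ, 2 * ωh τ t = m + τ * l := by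
  fin_cases t
  · exact ⟨0, 0, by simp [ωh]⟩
  · exact ⟨1, 0, by simp [ωh]⟩
  · exact ⟨1, 1, by simp [ωh]; ring⟩
  · exact ⟨0, 1, by simp [ωh]; ring⟩

/-- Quasi-periodicity of `θ` under the period `2 * ωh τ t`. -/
lemma exists_θ_add_two_mul_ωh (τ : ℂ) (t : Fin 4) :
    ∃ E : ℂ → ℂ, Differentiable ℂ E ∧ E 0 ≠ 0 ∧
      ∀ z, θ τ (z + 2 * ωh τ t) = E z * θ τ z := by
  have hd : Differentiable ℂ fun z => cexp (-(Real.pi * I * τ) - 2 * Real.pi * I * z) := by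
    fun_prop
  fin_cases t
  · exact ⟨fun _ => 1, by fun_prop, one_ne_zero, fun z => by simp [ωh]⟩
  · exact ⟨fun _ => -1, by fun_prop, by simp, fun z => by simp [ωh, θ_add_one]⟩
  · refine ⟨_, hd, Complex.exp_ne_zero _, fun z => ?_⟩
    have h : z + 2 * ωh τ 2 = z + τ + 1 := by simp [ωh]; ring
    exact (congrArg (θ τ) h).trans (by rw [θ_add_one, θ_add_tau]; ring)
  · refine ⟨_, hd.neg, neg_ne_zero.mpr (Complex.exp_ne_zero _), fun z => ?_⟩
    have h : z + 2 * ωh τ 3 = z + τ := by simp [ωh]; ring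
    exact (congrArg (θ τ) h).trans (θ_add_tau τ z)

lemma θ_two_mul_ωh {τ : ℂ} (hτ : 0 < τ.im) (t : Fin 4) : θ τ (2 * ωh τ t) = 0 := by
  obtain ⟨E, -, -, h⟩ := exists_θ_add_two_mul_ωh τ t
  rw [← zero_add (2 * _), h, θ_zero hτ, mul_zero]

lemma deriv_θ_two_mul_ωh_ne_zero {τ : ℂ} (hτ : 0 < τ.im) (t : Fin 4) :
    deriv (θ τ) (2 * ωh τ t) ≠ 0 := by
  obtain ⟨E, hE, hE0, h⟩ := exists_θ_add_two_mul_ωh τ t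
  have hθ := differentiable_θ hτ
  have h1 := (hθ (0 + 2 * ωh τ t)).hasDerivAt.comp_add_const 0 (2 * ωh τ t)
  have h2 : HasDerivAt (fun z => E z * θ τ z) _ 0 := (hE 0).hasDerivAt.mul (hθ 0).hasDerivAt
  rw [funext h] at h1
  have h3 := h1.unique h2
  rw [zero_add, θ_zero hτ, mul_zero, zero_add] at h3
  rw [h3]
  exact mul_ne_zero hE0 (deriv_θ_zero_ne_zero hτ)

lemma fcoef_add_one (τ : ℂ) (a : Fin 4 → ℂ) (ν z : ℂ) :
    fcoef τ a ν (z + 1) = fcoef τ a ν z := by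
  have h : ∀ i, θ τ (z + 1 + a i - ν) = -θ τ (z + a i - ν) := fun i => by
    rw [← θ_add_one]; congr 1; ring
  have h2 : θ τ (2 * (z + 1)) = θ τ (2 * z) := by
    rw [show 2 * (z + 1) = 2 * z + 1 + 1 by ring, θ_add_one, θ_add_one, neg_neg]
  simp only [fcoef, h, h2, Fin.prod_univ_four]
  ring

lemma fcoef_add_tau (τ : ℂ) (a : Fin 4 → ℂ) (ha : ∑ i, a i = 0) (ν z : ℂ) :
    fcoef τ a ν (z + τ) = cexp (8 * Real.pi * I * ν) * fcoef τ a ν z := by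
  have h : ∀ i, θ τ (z + τ + a i - ν) =
      -cexp (-(Real.pi * I * τ) - 2 * Real.pi * I * (z + a i - ν)) * θ τ (z + a i - ν) :=
    fun i => by rw [← θ_add_tau]; congr 1; ring
  have h2 : θ τ (2 * (z + τ)) = cexp (-(4 * Real.pi * I * τ) - 8 * Real.pi * I * z) *
      θ τ (2 * z) := by
    rw [show 2 * (z + τ) = 2 * z + τ + τ by ring, θ_add_tau, θ_add_tau, ← mul_assoc,
      neg_mul_neg, ← Complex.exp_add]
    congr 2
    ring
  have h3 : ∏ i, -cexp (-(Real.pi * I * τ) - 2 * Real.pi * I * (z + a i - ν)) =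
      cexp (8 * Real.pi * I * ν) * cexp (-(4 * Real.pi * I * τ) - 8 * Real.pi * I * z) := by
    rw [Finset.prod_neg, ← Complex.exp_sum, ← Complex.exp_add, Finset.card_univ,
      Fintype.card_fin, Even.neg_one_pow (by decide), one_mul]
    congr 1
    rw [Fin.sum_univ_four] at ha ⊢
    linear_combination (-2 * Real.pi * I) * ha
  simp only [fcoef, h, h2, Finset.prod_mul_distrib, h3]
  rw [mul_comm (cexp (8 * Real.pi * I * ν)), mul_assoc,
    mul_div_mul_left _ _ (Complex.exp_ne_zero _), mul_div_assoc]

lemma fcoef_add_two_mul_ωh (τ : ℂ) (a : Fin 4 → ℂ) (ha : ∑ i, a i = 0) (ν z : ℂ) (t : Fin 4) :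
    fcoef τ a ν (z + 2 * ωh τ t) = cexp (lamh ν t) * fcoef τ a ν z := by
  fin_cases t
  · simp [ωh, lamh]
  · simp [ωh, lamh, fcoef_add_one]
  · have h : z + 2 * ωh τ 2 = z + τ + 1 := by simp [ωh]; ring
    exact (congrArg (fcoef τ a ν) h).trans ((fcoef_add_one ..).trans (fcoef_add_tau τ a ha ν z))
  · have h : z + 2 * ωh τ 3 = z + τ := by simp [ωh]; ring
    exact (congrArg (fcoef τ a ν) h).trans (fcoef_add_tau τ a ha ν z)

lemma AnalyticAt.regularAt {g : ℂ → ℂ} {p : ℂ} (h : AnalyticAt ℂ g p) : RegularAt g p :=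
  ⟨g, h, Eventually.of_forall fun _ => rfl⟩

namespace RegularAt

variable {g h φ : ℂ → ℂ} {p : ℂ}

lemma add (hg : RegularAt g p) (hh : RegularAt h p) : RegularAt (fun z => g z + h z) p := by
  obtain ⟨G, hG, eG⟩ := hg
  obtain ⟨H, hH, eH⟩ := hh
  exact ⟨fun z => G z + H z, hG.add hH, by filter_upwards [eG, eH] with z h1 h2; rw [h1, h2]⟩

lemma mul (hg : RegularAt g p) (hh : RegularAt h p) : RegularAt (fun z => g z * h z) p := by
  obtain ⟨G, hG, eG⟩ := hg
  obtain ⟨H, hH, eH⟩ := hh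
  exact ⟨fun z => G z * H z, hG.mul hH, by filter_upwards [eG, eH] with z h1 h2; rw [h1, h2]⟩

lemma comp_injective (hg : RegularAt g (φ p)) (hφ : AnalyticAt ℂ φ p)
    (hinj : Function.Injective φ) : RegularAt (fun z => g (φ z)) p := by
  obtain ⟨G, hG, eG⟩ := hg
  refine ⟨fun z => G (φ z), hG.comp hφ, ?_⟩
  exact (tendsto_nhdsWithin_of_tendsto_nhds_of_eventually_within φ
    (hφ.continuousAt.tendsto.mono_left nhdsWithin_le_nhds)
    (eventually_mem_nhdsWithin.mono fun z hz => hinj.ne hz)).eventually eG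

end RegularAt

lemma AnalyticAt.dslope_self {f : ℂ → ℂ} {p : ℂ} (hf : AnalyticAt ℂ f p) :
    AnalyticAt ℂ (dslope f p) p := by
  obtain ⟨s, hs⟩ := hf
  exact hs.has_fpower_series_dslope_fslope.analyticAt

/-- At a simple zero `p` of `D`, the quotient `(z - p) / D z` is regular. -/
lemma regularAt_sub_div {D : ℂ → ℂ} {p : ℂ} (hD : AnalyticAt ℂ D p) (h0 : D p = 0)
    (h1 : deriv D p ≠ 0) : RegularAt (fun z => (z - p) / D z) p := by
  refine ⟨fun z => (dslope D p z)⁻¹, hD.dslope_self.inv (by rwa [dslope_same]), ?_⟩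
  filter_upwards [eventually_mem_nhdsWithin] with z hz
  rw [dslope_of_ne _ hz, slope_def_field, h0, sub_zero, inv_div]

/-- If `F` has at most a simple pole at `p`, it cancels in the symmetrized function
`F z + ε z * F (2 * p - z)` when `ε p = 1`. -/
lemma regularAt_add_reflect {F ε : ℂ → ℂ} {p : ℂ} (hF : RegularAt (fun z => (z - p) * F z) p)
    (hε : AnalyticAt ℂ ε p) (hεp : ε p = 1) :
    RegularAt (fun z => F z + ε z * F (2 * p - z)) p := by
  have hp : 2 * p - p = p := by ring
  obtain ⟨K, hK, eK⟩ := hF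
  have hKr : AnalyticAt ℂ (fun z => K (2 * p - z)) p :=
    AnalyticAt.fun_comp (by rwa [hp]) (by fun_prop)
  have hne : Tendsto (fun z => 2 * p - z) (nhdsWithin p {p}ᶜ) (nhdsWithin p {p}ᶜ) := by
    refine tendsto_nhdsWithin_of_tendsto_nhds_of_eventually_within _
      (((by fun_prop : Continuous fun z => 2 * p - z).tendsto' p p hp).mono_left
        nhdsWithin_le_nhds) ?_
    filter_upwards [eventually_mem_nhdsWithin] with z hz h
    rw [Set.mem_singleton_iff] at h
    exact hz (by rw [Set.mem_singleton_iff]; linear_combination -h)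
  have eKr : ∀ᶠ z in nhdsWithin p {p}ᶜ, (2 * p - z - p) * F (2 * p - z) = K (2 * p - z) :=
    hne.eventually eK
  refine ⟨dslope (fun z => K z - ε z * K (2 * p - z)) p, (hK.sub (hε.mul hKr)).dslope_self, ?_⟩
  filter_upwards [eK, eKr, eventually_mem_nhdsWithin] with z h1 h2 hz
  have hzp : z - p ≠ 0 := sub_ne_zero.mpr hz
  rw [dslope_of_ne _ hz, slope_def_field, hp, hεp, ← h1, ← h2, eq_div_iff hzp]
  ring

lemma meromorphicAt_fcoef {τ : ℂ} (hτ : 0 < τ.im) (a : Fin 4 → ℂ) (ν z : ℂ) :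
    MeromorphicAt (fcoef τ a ν) z := by
  have hθ := differentiable_θ hτ
  have h1 : Differentiable ℂ fun z => ∏ i, θ τ (z + a i - ν) := by
    fun_prop
  have h2 : Differentiable ℂ fun z => θ τ (2 * z) := by fun_prop
  exact (h1.analyticAt z).meromorphicAt.div (h2.analyticAt z).meromorphicAt

lemma θ_two_mul_ne_zero {τ η : ℂ} (hτ : 0 < τ.im)
    (hgen : ∀ n : ℕ, 0 < n → ¬ ∃ m l : ℤ, (n : ℂ) * η = (m : ℂ) + τ * l) (t : Fin 4) {k : ℤ}
    (hk : k ≠ 0) : θ τ (2 * (ωh τ t + k * η)) ≠ 0 := by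
  intro h
  obtain ⟨m, l, hml⟩ := mem_lattice_of_θ_eq_zero hτ h
  obtain ⟨m', l', hml'⟩ := exists_two_mul_ωh_eq τ t
  obtain ⟨n, hn | hn⟩ := Int.eq_nat_or_neg k
  · refine hgen (2 * n) (by lia) ⟨m - m', l - l', ?_⟩
    rw [hn] at hml
    push_cast at hml ⊢
    linear_combination hml - hml'
  · refine hgen (2 * n) (by lia) ⟨m' - m, l' - l, ?_⟩
    rw [hn] at hml
    push_cast at hml ⊢
    linear_combination hml' - hml

/-- if `nη ∉ Λ` for all positive integers `n`, then the Sklyanin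
difference operator `A(a,ν)` maps each space `ℳ_t` into itself. -/
theorem statement1 (τ : ℂ) (hτ : 0 < τ.im) (η : ℂ) (hη : η ≠ 0)
    (hgen : ∀ n : ℕ, 0 < n → ¬ ∃ m l : ℤ, (n : ℂ) * η = (m : ℂ) + τ * l)
    (ν : ℂ) (a : Fin 4 → ℂ) (ha : (∑ i, a i) = 0) (t : Fin 4)
    (g : ℂ → ℂ) (hg : memM τ η ν t g) :
    memM τ η ν t (fun z => fcoef τ a ν z * g (z + η) + fcoef τ a ν (-z) * g (z - η)) := by
  obtain ⟨hmero, hreg, hsymm⟩ := hg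
  have hθ := differentiable_θ hτ
  set ω := ωh τ t with hω
  set lam := lamh ν t with hlam
  set F : ℂ → ℂ := fun z => fcoef τ a ν z * g (z + η) with hF
  have hreflect : ∀ z, fcoef τ a ν (-z) * g (z - η) =
      cexp (-(lam * (z - ω) / η)) * F (2 * ω - z) := by
    intro z
    have h1 := hsymm (η - (z - ω))
    have h2 := fcoef_add_two_mul_ωh τ a ha ν (-z) t
    have h3 : lam * (η - (z - ω)) / η = lam + -(lam * (z - ω) / η) := by
      field_simp
      ring
    rw [h3, Complex.exp_add, show ω - (η - (z - ω)) = z - η by ring,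
      show ω + (η - (z - ω)) = 2 * ω - z + η by ring] at h1
    rw [neg_add_eq_sub] at h2
    simp only [hF]
    rw [h1, h2]
    ring
  refine ⟨fun z _ => ?_, fun k => ?_, fun z => ?_⟩
  · have hshift : ∀ c, MeromorphicAt (fun x => g (x + c)) z := fun c =>
      (hmero (z + c) trivial).comp_analyticAt (f := g) (g := fun x => x + c) (by fun_prop)
    refine MeromorphicAt.add ((meromorphicAt_fcoef hτ a ν z).mul (hshift η))
      (MeromorphicAt.mul ?_ ?_)
    · exact (meromorphicAt_fcoef hτ a ν (-z)).comp_analyticAt (g := fun x => -x) (by fun_prop)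
    · simpa only [sub_eq_add_neg] using hshift (-η)
  · simp only [hreflect]
    have hnum : Differentiable ℂ fun z => ∏ i, θ τ (z + a i - ν) := by fun_prop
    have hden : Differentiable ℂ fun z => θ τ (2 * z) := by fun_prop
    have hshift : ∀ k : ℤ, RegularAt (fun z => g (z + η)) (ω + k * η) := fun k =>
      RegularAt.comp_injective (φ := fun z => z + η)
        (by simpa only [Int.cast_add, Int.cast_one, add_mul, one_mul, add_assoc]
          using hreg (k + 1)) (by fun_prop) (add_left_injective η)
    have hε : Differentiable ℂ fun z => cexp (-(lam * (z - ω) / η)) := by fun_prop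
    by_cases hk : k = 0
    · rw [hk, Int.cast_zero, zero_mul, add_zero]
      refine regularAt_add_reflect ?_ (hε.analyticAt ω) (by simp)
      have hD : deriv (fun z => θ τ (2 * z)) ω ≠ 0 := by
        rw [deriv_comp_mul_left]
        exact smul_ne_zero two_ne_zero (deriv_θ_two_mul_ωh_ne_zero hτ t)
      have h0 := hshift 0
      rw [Int.cast_zero, zero_mul, add_zero] at h0
      have h1 := ((hnum.analyticAt ω).regularAt.mul
        (regularAt_sub_div (hden.analyticAt ω) (θ_two_mul_ωh hτ t) hD)).mul h0
      convert h1 using 2 with z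
      simp only [fcoef]
      ring
    · have hFreg : ∀ k : ℤ, k ≠ 0 → RegularAt F (ω + k * η) := fun k hk =>
        ((hnum.analyticAt _).div (hden.analyticAt _)
          (θ_two_mul_ne_zero hτ hgen t hk)).regularAt.mul (hshift k)
      refine (hFreg k hk).add ((hε.analyticAt _).regularAt.mul ?_)
      refine RegularAt.comp_injective (φ := fun z => 2 * ω - z) ?_ (by fun_prop)
        sub_right_injective
      have h := hFreg (-k) (neg_ne_zero.mpr hk)
      rwa [show ω + ((-k : ℤ) : ℂ) * η = 2 * ω - (ω + k * η) by push_cast; ring] at h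
  · simp only [hreflect]
    have h1 : cexp (-(lam * (ω - z - ω) / η)) = cexp (lam * z / η) := by congr 1; ring
    have h2 : cexp (lam * z / η) * cexp (-(lam * (ω + z - ω) / η)) = 1 := by
      rw [← Complex.exp_add, ← Complex.exp_zero]; congr 1; ring
    rw [h1, show 2 * ω - (ω - z) = ω + z by ring, show 2 * ω - (ω + z) = ω - z by ring]
    change F (ω - z) + _ = _ * (F (ω + z) + _)
    linear_combination -F (ω - z) * h2
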